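/- Let G be a finite simple bipartite graph, let v be a vertex of G that is not saturated by some maximum matching of G, let w be a vertex adjacent to v, and suppose the edge uw belongs to some maximum matching of G. Then there exists a maximum matching of G that does not saturate u. -/

import Mathlib

variable {V : Type*}

/-- A matching of `G`: a set of edges of `G`, no two of which share an endpoint. -/
def IsMatching (G : SimpleGraph V) (M : Set (Sym2 V)) : Prop :=
  M ⊆ G.edgeSet ∧ M.Pairwise fun e f => ∀ v : V, v ∈ e → v ∉ f

/-- A maximum matching of `G`: a matching of maximum cardinality among all matchings of `G`. -/
def IsMaxMatching (G : SimpleGraph V) (M : Set (Sym2 V)) : Prop :=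
  IsMatching G M ∧ ∀ N : Set (Sym2 V), IsMatching G N → N.ncard ≤ M.ncard

/-- `M` saturates the vertex `v`: `v` is an endpoint of some edge of `M`. -/
def Saturates (M : Set (Sym2 V)) (v : V) : Prop := ∃ e ∈ M, v ∈ e

/-!
Let `M₁` be a maximum matching missing `v` and `M₂` one containing `uw`. The component of `v` in the
symmetric difference of `M₁` and `M₂` is a path `v a b …` of even length that starts with an edge of
`M₂`, and switching `M₂` along it gives a maximum matching `M` missing `v`. If `uw` is still in `M`,
replace it by `vw`. Otherwise `uw` lies on the path; bipartiteness makes `u` come before `w`, and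
switching `M₁` along the part of the path from `v` to `u` gives a maximum matching missing `u`.

The path is followed two edges at a time: replacing `ab` by `va` in `M₁` gives a maximum matching
that misses `b` instead of `v` and has one more edge in common with `M₂`.
-/

variable {G : SimpleGraph V} {M N M₁ M₂ : Set (Sym2 V)} {a b p v w x y u : V} {e f : Sym2 V}

/-- A vertex is inessential if some maximum matching misses it. These vertices form the set `D(G)`
of the Gallai–Edmonds decomposition. -/
def IsInessential (G : SimpleGraph V) (v : V) : Prop :=
  ∃ M : Set (Sym2 V), IsMaxMatching G M ∧ ¬ Saturates M v

/-- The edge set obtained from `M` by sliding its edge `ab` along the edge `pa`, that is, replacing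
`ab` by `pa`. When `M` misses `p`, this is the switch along the alternating path `p a b`. -/
def slideEdge (M : Set (Sym2 V)) (p a b : V) : Set (Sym2 V) :=
  insert s(p, a) (M \ {s(a, b)})

theorem saturates_left_of_mem (h : s(x, y) ∈ M) : Saturates M x := ⟨_, h, Sym2.mem_mk_left x y⟩

theorem saturates_right_of_mem (h : s(x, y) ∈ M) : Saturates M y := ⟨_, h, Sym2.mem_mk_right x y⟩

theorem Saturates.mono (h : Saturates N x) (hNM : N ⊆ M) : Saturates M x :=
  let ⟨e, he, hx⟩ := h
  ⟨e, hNM he, hx⟩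

theorem Saturates.exists_mem (h : Saturates M x) : ∃ y, s(x, y) ∈ M := by
  obtain ⟨e, he, hx⟩ := h
  obtain ⟨y, rfl⟩ := Sym2.mem_iff_exists.1 hx
  exact ⟨y, he⟩

theorem saturates_insert : Saturates (insert e M) x ↔ x ∈ e ∨ Saturates M x :=
  Set.exists_mem_insert

namespace IsMatching

theorem mono (hM : IsMatching G M) (hNM : N ⊆ M) : IsMatching G N :=
  ⟨hNM.trans hM.1, hM.2.mono hNM⟩

theorem eq_of_mem_of_mem (hM : IsMatching G M) (he : e ∈ M) (hf : f ∈ M) (hxe : x ∈ e)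
    (hxf : x ∈ f) : e = f :=
  hM.2.eq he hf fun h => h x hxe hxf

theorem not_saturates_sdiff_singleton (hM : IsMatching G M) (he : e ∈ M) (hx : x ∈ e) :
    ¬ Saturates (M \ {e}) x := by
  rintro ⟨f, ⟨hf, hfe⟩, hxf⟩
  exact hfe (hM.eq_of_mem_of_mem hf he hxf hx)

protected theorem insert (hM : IsMatching G M) (hxy : G.Adj x y) (hx : ¬ Saturates M x)
    (hy : ¬ Saturates M y) : IsMatching G (insert s(x, y) M) := by
  have not_saturates_of_mem : ∀ z ∈ s(x, y), ¬ Saturates M z := by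
    simpa only [Sym2.ball] using ⟨hx, hy⟩
  refine ⟨Set.insert_subset hxy hM.1, hM.2.insert fun e he _ => ⟨fun z hz hze => ?_,
    fun z hze hz => ?_⟩⟩ <;>
  exact not_saturates_of_mem z hz ⟨e, he, hze⟩

protected theorem slideEdge (hM : IsMatching G M) (hp : ¬ Saturates M p) (hpa : G.Adj p a)
    (hab : s(a, b) ∈ M) : IsMatching G (slideEdge M p a b) :=
  (hM.mono Set.sdiff_subset).insert hpa (fun h => hp (h.mono Set.sdiff_subset))
    (hM.not_saturates_sdiff_singleton hab (Sym2.mem_mk_left a b))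

theorem not_saturates_slideEdge (hM : IsMatching G M) (hp : ¬ Saturates M p)
    (hab : s(a, b) ∈ M) : ¬ Saturates (slideEdge M p a b) b := by
  have b_ne_p : b ≠ p := by
    rintro rfl
    exact hp (saturates_right_of_mem hab)
  have b_ne_a : b ≠ a := (hM.1 hab : G.Adj a b).ne'
  rw [slideEdge, saturates_insert, Sym2.mem_iff]
  rintro ((h | h) | h)
  · exact b_ne_p h
  · exact b_ne_a h
  · exact hM.not_saturates_sdiff_singleton hab (Sym2.mem_mk_right a b) h

end IsMatching

namespace IsMaxMatching

/-- An infinite set has `ncard` zero, so it loses against any one of its own edges. -/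
theorem finite (hM : IsMaxMatching G M) : M.Finite := by
  by_contra hinf
  obtain ⟨e, he⟩ := Set.Infinite.nonempty hinf
  have hle := hM.2 {e} (hM.1.mono (Set.singleton_subset_iff.2 he))
  rw [Set.ncard_singleton, Set.Infinite.ncard hinf] at hle
  exact Nat.not_succ_le_zero 0 hle

theorem saturates_of_adj (hM : IsMaxMatching G M) (hxy : G.Adj x y) (hx : ¬ Saturates M x) :
    Saturates M y := by
  by_contra hy
  have hle := hM.2 _ (hM.1.insert hxy hx hy)
  rw [Set.ncard_insert_of_notMem (fun h => hx (saturates_left_of_mem h)) hM.finite] at hle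
  exact Nat.not_succ_le_self _ hle

protected theorem slideEdge (hM : IsMaxMatching G M) (hp : ¬ Saturates M p) (hpa : G.Adj p a)
    (hab : s(a, b) ∈ M) : IsMaxMatching G (slideEdge M p a b) := by
  refine ⟨hM.1.slideEdge hp hpa hab, fun N hN => ?_⟩
  rw [slideEdge, Set.ncard_exchange (fun h => hp (saturates_left_of_mem h)) hab]
  exact hM.2 N hN

theorem isInessential_of_adj_of_mem (hM : IsMaxMatching G M) (hp : ¬ Saturates M p)
    (hpa : G.Adj p a) (hab : s(a, b) ∈ M) : IsInessential G b :=
  ⟨_, hM.slideEdge hp hpa hab, hM.1.not_saturates_slideEdge hp hab⟩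

end IsMaxMatching

theorem inter_subset_slideEdge (hab : s(a, b) ∉ M₂) : M₁ ∩ M₂ ⊆ slideEdge M₁ v a b :=
  fun _ ⟨he₁, he₂⟩ => Or.inr ⟨he₁, fun h => hab (h ▸ he₂)⟩

theorem sdiff_slideEdge_ssubset (hva : s(v, a) ∈ M₂) (hva₁ : s(v, a) ∉ M₁) (hab : s(a, b) ∉ M₂) :
    M₂ \ slideEdge M₁ v a b ⊂ M₂ \ M₁ := by
  refine (Set.ssubset_iff_of_subset ?_).2
    ⟨s(v, a), ⟨hva, hva₁⟩, fun h => h.2 (Set.mem_insert _ _)⟩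
  exact fun e ⟨he₂, he⟩ => ⟨he₂, fun he₁ => he (inter_subset_slideEdge hab ⟨he₁, he₂⟩)⟩

theorem color_eq_of_adj_of_adj (C : G.Coloring (Fin 2)) (hxy : G.Adj x y) (hyw : G.Adj y w) :
    C x = C w := by
  have := C.valid hxy
  have := C.valid hyw
  omega

/-- `M` is `M₂` switched along the alternating path from `v`. The clause `M₁ ∩ M₂ ⊆ M` is there for
the induction: it keeps the edge `va`, once slid into `M₁`, available for sliding back. -/
theorem exists_isMaxMatching_not_saturates_inter_subset (C : G.Coloring (Fin 2))
    (h₁ : IsMaxMatching G M₁) (hv : ¬ Saturates M₁ v) (h₂ : IsMaxMatching G M₂) :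
    ∃ M, IsMaxMatching G M ∧ ¬ Saturates M v ∧ M₁ ∩ M₂ ⊆ M ∧
      ∀ u w, s(u, w) ∈ M₂ \ M → C u = C v → IsInessential G u := by
  induction hn : (M₂ \ M₁).ncard using Nat.strong_induction_on generalizing M₁ v with
  | _ n ih =>
  by_cases hv₂ : Saturates M₂ v
  swap
  · exact ⟨M₂, h₂, hv₂, Set.inter_subset_right, fun u w h => absurd h.1 h.2⟩
  obtain ⟨a, hva⟩ := hv₂.exists_mem
  have adj_va : G.Adj v a := h₂.1.1 hva
  obtain ⟨b, hab⟩ := (h₁.saturates_of_adj adj_va hv).exists_mem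
  have adj_ab : G.Adj a b := h₁.1.1 hab
  have hva₁ : s(v, a) ∉ M₁ := fun h => hv (saturates_left_of_mem h)
  have hab₂ : s(a, b) ∉ M₂ := fun h => hva₁ <|
    h₂.1.eq_of_mem_of_mem h hva (Sym2.mem_mk_left a b) (Sym2.mem_mk_right v a) ▸ hab
  have closer : (M₂ \ slideEdge M₁ v a b).ncard < n :=
    hn ▸ Set.ncard_lt_ncard (sdiff_slideEdge_ssubset hva hva₁ hab₂) h₂.finite.sdiff
  obtain ⟨M, hM, hMb, hsub, hiness⟩ := ih _ closer (h₁.slideEdge hv adj_va hab)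
    (h₁.1.not_saturates_slideEdge hv hab) rfl
  have hav : s(a, v) ∈ M := Sym2.eq_swap ▸ hsub ⟨Set.mem_insert _ _, hva⟩
  refine ⟨slideEdge M b a v, hM.slideEdge hMb adj_ab.symm hav,
    hM.1.not_saturates_slideEdge hMb hav, fun e he => ?_, fun u w ⟨huw₂, huw⟩ hu => ?_⟩
  · have heM : e ∈ M := hsub ⟨inter_subset_slideEdge hab₂ he, he.2⟩
    exact Or.inr ⟨heM, fun h => hv (saturates_right_of_mem (h ▸ he.1))⟩
  by_cases huwM : s(u, w) ∈ M
  · have huw_eq : s(u, w) = s(a, v) := by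
      by_contra hne
      exact huw (Or.inr ⟨huwM, hne⟩)
    rcases Sym2.eq_iff.1 huw_eq with ⟨rfl, -⟩ | ⟨rfl, -⟩
    · exact absurd hu.symm (C.valid adj_va)
    · exact ⟨M₁, h₁, hv⟩
  · exact hiness u w ⟨huw₂, huwM⟩ (hu.trans (color_eq_of_adj_of_adj C adj_va adj_ab))

theorem exists_maxMatching_missing_u_general (hG : G.Colorable 2) (hv : IsInessential G v)
    (hvw : G.Adj v w) (hu : ∃ M₂ : Set (Sym2 V), IsMaxMatching G M₂ ∧ s(u, w) ∈ M₂) :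
    IsInessential G u := by
  obtain ⟨C⟩ := hG
  obtain ⟨M₁, h₁, hv₁⟩ := hv
  obtain ⟨M₂, h₂, huw⟩ := hu
  obtain ⟨M, hM, hMv, -, hiness⟩ := exists_isMaxMatching_not_saturates_inter_subset C h₁ hv₁ h₂
  by_cases huwM : s(u, w) ∈ M
  · exact hM.isInessential_of_adj_of_mem hMv hvw (Sym2.eq_swap ▸ huwM)
  · exact hiness u w ⟨huw, huwM⟩ (color_eq_of_adj_of_adj C (h₂.1.1 huw) hvw.symm)

/-- Let `G` be a finite bipartite graph, let `v` be a vertex missed by some maximum matching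
of `G`, let `w` be adjacent to `v`, and suppose the edge `uw` lies in some maximum matching
of `G`.  Then some maximum matching of `G` does not saturate `u`. -/
theorem exists_maxMatching_missing_u
    {V : Type*} [Fintype V] (G : SimpleGraph V) (hG : G.Colorable 2) (v w u : V)
    (hv : ∃ M1 : Set (Sym2 V), IsMaxMatching G M1 ∧ ¬ Saturates M1 v)
    (hvw : G.Adj v w)
    (hu : ∃ M2 : Set (Sym2 V), IsMaxMatching G M2 ∧ s(u, w) ∈ M2) :
    ∃ M : Set (Sym2 V), IsMaxMatching G M ∧ ¬ Saturates M u :=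
  exists_maxMatching_missing_u_general hG hv hvw hu
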